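/- For every x ∈ {1,…,m} and every n ≥ 0, the degree-n cohomology of the restricted complex (C^•_x, D_x) has dimension dim_ℂ H^n_x = (r+s−1)^n (here D_x means D_{e_1} when x = 1); indeed the inclusion of Ĉ^n_x into the cocycles induces an isomorphism Ĉ^n_x ≅ H^n_x. -/

import Mathlib

open Finsupp Submodule LinearMap

set_option maxSynthPendingDepth 2

namespace NilpotentCohomology

/-- The big space of cochains of all degrees: formal ℂ-linear combinations of
basis symbols `φ^I_x` indexed by a multi-index `I : List (Fin m)` and an output
index `x : Fin m`. -/
abbrev Cochain (m : ℕ) : Type := (List (Fin m) × Fin m) →₀ ℂ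

/-- Parity of an index: `0` if the index is among the first `r` (even) ones, `1` otherwise. -/
def par (r : ℕ) {m : ℕ} (i : Fin m) : ℕ := if (i : ℕ) < r then 0 else 1

/-- Parity of a multi-index: the sum of the parities of its entries. -/
def lpar (r : ℕ) {m : ℕ} (I : List (Fin m)) : ℕ := (I.map (par r)).sum

/-- Parity of a basis cochain `φ^I_x`: `|I| + |x|`. -/
def ppar (r : ℕ) {m : ℕ} (p : List (Fin m) × Fin m) : ℕ := lpar r p.1 + par r p.2

/-- `(I, J, k)`: the multi-index `I` with its `k`-th entry (0-indexed) replaced by the string `J`. -/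
def insertAt {m : ℕ} (I J : List (Fin m)) (k : ℕ) : List (Fin m) :=
  I.take k ++ J ++ I.drop (k + 1)

/-- The insertion product of two basis cochains `φ^I_x ∘ φ^J_y`. -/
noncomputable def basisComp (r : ℕ) {m : ℕ} (p q : List (Fin m) × Fin m) : Cochain m :=
  ∑ k : Fin p.1.length,
    if p.1.get k = q.2 then
      ((-1 : ℂ) ^ (lpar r (p.1.take ((k : ℕ) + 1)) * ppar r q)) •
        Finsupp.single (insertAt p.1 q.1 (k : ℕ), p.2) (1 : ℂ)
    else 0

/-- The insertion product, extended bilinearly. -/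
noncomputable def comp (r : ℕ) {m : ℕ} :
    Cochain m →ₗ[ℂ] Cochain m →ₗ[ℂ] Cochain m :=
  Finsupp.lsum ℂ fun p => LinearMap.toSpanSingleton ℂ _
    (Finsupp.lsum ℂ fun q => LinearMap.toSpanSingleton ℂ (Cochain m) (basisComp r p q))

/-- The bracket `[φ, ψ] = φ∘ψ − (−1)^{|φ||ψ|} ψ∘φ` of two parity-homogeneous cochains
of parities `pf` and `pg`. -/
noncomputable def bracket (r : ℕ) {m : ℕ} (pf pg : ℕ) (f g : Cochain m) : Cochain m :=
  comp r f g - ((-1 : ℂ) ^ (pf * pg)) • comp r g f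

/-- The quadratic cochain `φ^{(a,a)}_b`. -/
noncomputable def dd {m : ℕ} (a b : Fin m) : Cochain m :=
  Finsupp.single ([a, a], b) (1 : ℂ)

/-- The linear map multiplying each basis cochain by `(−1)^{its parity}`. -/
noncomputable def twist (r : ℕ) {m : ℕ} : Cochain m →ₗ[ℂ] Cochain m :=
  Finsupp.lsum ℂ fun p => LinearMap.toSpanSingleton ℂ (Cochain m)
    (((-1 : ℂ) ^ (ppar r p)) • Finsupp.single p (1 : ℂ))

/-- The coboundary operator `D(φ) = [d, φ] = d∘φ − (−1)^{|d||φ|} φ∘d` for the odd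
codifferential `d = φ^{(a,a)}_b`, extended linearly from parity-homogeneous `φ`. -/
noncomputable def Dop (r : ℕ) {m : ℕ} (a b : Fin m) : Cochain m →ₗ[ℂ] Cochain m :=
  comp r (dd a b) - ((comp r).flip (dd a b)) ∘ₗ twist r

/-- `C^n`: the span of the basis cochains `φ^I_x` with `I` of length `n`. -/
noncomputable def Cn (m n : ℕ) : Submodule ℂ (Cochain m) :=
  Submodule.span ℂ
    {f | ∃ I : List (Fin m), I.length = n ∧ ∃ x : Fin m, f = Finsupp.single (I, x) 1}

/-- `C^n_x`: the span of the basis cochains `φ^I_x` with `I` of length `n` and output `x`. -/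
noncomputable def Cnx (m : ℕ) (n : ℕ) (x : Fin m) : Submodule ℂ (Cochain m) :=
  Submodule.span ℂ
    {f | ∃ I : List (Fin m), I.length = n ∧ f = Finsupp.single (I, x) 1}

/-- The projection onto the cochains with output index `x`. -/
noncomputable def projOut {m : ℕ} (x : Fin m) : Cochain m →ₗ[ℂ] Cochain m :=
  Finsupp.lsum ℂ fun p => LinearMap.toSpanSingleton ℂ (Cochain m)
    (if p.2 = x then Finsupp.single p (1 : ℂ) else 0)

/-- `λ^J (φ^I_x) = φ^{JI}_x`, extended linearly. -/
noncomputable def lam {m : ℕ} (J : List (Fin m)) : Cochain m →ₗ[ℂ] Cochain m :=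
  Finsupp.lsum ℂ fun p => LinearMap.toSpanSingleton ℂ (Cochain m)
    (Finsupp.single (J ++ p.1, p.2) (1 : ℂ))

/-- `ρ^J (φ^I_x) = (−1)^{|I||J|} φ^{IJ}_x`, extended linearly. -/
noncomputable def rho (r : ℕ) {m : ℕ} (J : List (Fin m)) : Cochain m →ₗ[ℂ] Cochain m :=
  Finsupp.lsum ℂ fun p => LinearMap.toSpanSingleton ℂ (Cochain m)
    (((-1 : ℂ) ^ (lpar r p.1 * lpar r J)) • Finsupp.single (p.1 ++ J, p.2) (1 : ℂ))

/-- `θ = λ^{(a,b)} − λ^{(b,a)}`. -/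
noncomputable def theta {m : ℕ} (a b : Fin m) : Cochain m →ₗ[ℂ] Cochain m :=
  lam [a, b] - lam [b, a]

/-- `τ`: swaps the outputs `a` and `b` of basis cochains (identity on other outputs). -/
noncomputable def tau {m : ℕ} (a b : Fin m) : Cochain m →ₗ[ℂ] Cochain m :=
  Finsupp.lsum ℂ fun p => LinearMap.toSpanSingleton ℂ (Cochain m)
    (Finsupp.single (p.1, if p.2 = a then b else if p.2 = b then a else p.2) (1 : ℂ))

/-! ### Full cohomology -/

/-- Cocycles of degree `n` of the full complex. -/
noncomputable def Zfull (r : ℕ) {m : ℕ} (a b : Fin m) (n : ℕ) : Submodule ℂ (Cochain m) :=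
  Cn m n ⊓ LinearMap.ker (Dop r a b)

/-- Coboundaries of degree `n` of the full complex (`C^{-1} = 0`). -/
noncomputable def Bfull (r : ℕ) {m : ℕ} (a b : Fin m) : ℕ → Submodule ℂ (Cochain m)
  | 0 => ⊥
  | n + 1 => Submodule.map (Dop r a b) (Cn m n)

/-- The full cohomology `H^n = Z^n / B^n`. -/
noncomputable abbrev Hfull (r : ℕ) {m : ℕ} (a b : Fin m) (n : ℕ) : Type :=
  Zfull r a b n ⧸ (Bfull r a b n).comap (Zfull r a b n).subtype

/-! ### The restricted complexes -/

/-- The restricted differential `D_x`: the `e₁`-output component of `D` when `x = a`,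
and `D` itself (which preserves output `x`) otherwise. -/
noncomputable def Dx (r : ℕ) {m : ℕ} (a b x : Fin m) : Cochain m →ₗ[ℂ] Cochain m :=
  if x = a then projOut a ∘ₗ Dop r a b else Dop r a b

/-- Cocycles of the restricted complex `(C^•_x, D_x)`. -/
noncomputable def Zx (r : ℕ) {m : ℕ} (a b x : Fin m) (n : ℕ) : Submodule ℂ (Cochain m) :=
  Cnx m n x ⊓ LinearMap.ker (Dx r a b x)

/-- Coboundaries of the restricted complex `(C^•_x, D_x)` (`C^{-1}_x = 0`). -/
noncomputable def Bx (r : ℕ) {m : ℕ} (a b x : Fin m) : ℕ → Submodule ℂ (Cochain m)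
  | 0 => ⊥
  | n + 1 => Submodule.map (Dx r a b x) (Cnx m n x)

/-- Cohomology `H^n_x` of the restricted complex `(C^•_x, D_x)`. -/
noncomputable abbrev Hx (r : ℕ) {m : ℕ} (a b x : Fin m) (n : ℕ) : Type :=
  Zx r a b x n ⧸ (Bx r a b x n).comap (Zx r a b x n).subtype

/-! ### The subcomplex `C^•_a ⊕ C^•_b` and the `b`-output complex -/

/-- `C^n_a ⊕ C^n_b` (internal direct sum). -/
noncomputable def Cpair (m : ℕ) (a b : Fin m) (n : ℕ) : Submodule ℂ (Cochain m) :=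
  Cnx m n a ⊔ Cnx m n b

noncomputable def Zpair (r : ℕ) {m : ℕ} (a b : Fin m) (n : ℕ) : Submodule ℂ (Cochain m) :=
  Cpair m a b n ⊓ LinearMap.ker (Dop r a b)

noncomputable def Bpair (r : ℕ) {m : ℕ} (a b : Fin m) : ℕ → Submodule ℂ (Cochain m)
  | 0 => ⊥
  | n + 1 => Submodule.map (Dop r a b) (Cpair m a b n)

/-- `H^n`: the cohomology of the subcomplex `(C^•_a ⊕ C^•_b, D)`. -/
noncomputable abbrev Hpair (r : ℕ) {m : ℕ} (a b : Fin m) (n : ℕ) : Type :=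
  Zpair r a b n ⧸ (Bpair r a b n).comap (Zpair r a b n).subtype

/-- Cocycles of `(C^•_b, D_b)`, where `D_b` is the restriction of `D`. -/
noncomputable def Zm (r : ℕ) {m : ℕ} (a b : Fin m) (n : ℕ) : Submodule ℂ (Cochain m) :=
  Cnx m n b ⊓ LinearMap.ker (Dop r a b)

noncomputable def Bm (r : ℕ) {m : ℕ} (a b : Fin m) : ℕ → Submodule ℂ (Cochain m)
  | 0 => ⊥
  | n + 1 => Submodule.map (Dop r a b) (Cnx m n b)

/-- `H^n_b`: the cohomology of `(C^•_b, D_b)`. -/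
noncomputable abbrev Hm (r : ℕ) {m : ℕ} (a b : Fin m) (n : ℕ) : Type :=
  Zm r a b n ⧸ (Bm r a b n).comap (Zm r a b n).subtype

lemma Zm_le_Zpair (r : ℕ) {m : ℕ} (a b : Fin m) (n : ℕ) :
    Zm r a b n ≤ Zpair r a b n :=
  inf_le_inf le_sup_right le_rfl

lemma Bm_le_Bpair (r : ℕ) {m : ℕ} (a b : Fin m) : ∀ n : ℕ, Bm r a b n ≤ Bpair r a b n
  | 0 => bot_le
  | _ + 1 => Submodule.map_mono le_sup_right

/-- The natural map `H^n_b → H^n` induced by the inclusion of cocycles. -/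
noncomputable def iotaHm (r : ℕ) {m : ℕ} (a b : Fin m) (n : ℕ) :
    Hm r a b n →ₗ[ℂ] Hpair r a b n :=
  Submodule.mapQ _ _ (Submodule.inclusion (Zm_le_Zpair r a b n))
    (fun z hz => Bm_le_Bpair r a b n hz)

/-- `Ĥ^n_f`: the image of `H^n_b` in `H^n`. -/
noncomputable def Hfhat (r : ℕ) {m : ℕ} (a b : Fin m) (n : ℕ) : Submodule ℂ (Hpair r a b n) :=
  LinearMap.range (iotaHm r a b n)

/-- `Ĥ^n_e = H^n / Ĥ^n_f`. -/
noncomputable abbrev Hehat (r : ℕ) {m : ℕ} (a b : Fin m) (n : ℕ) : Type :=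
  Hpair r a b n ⧸ Hfhat r a b n

/-! ### The spaces `Ĉ^n_x` of nontrivial cocycles -/

/-- The recursively defined subspaces `Ĉ^n_x` of nontrivial cocycles. -/
noncomputable def Chat (r : ℕ) {m : ℕ} (a b x : Fin m) : ℕ → Submodule ℂ (Cochain m)
  | 0 => Submodule.span ℂ {Finsupp.single (([] : List (Fin m)), x) 1}
  | 1 => Submodule.span ℂ
      ({Finsupp.single ([a], x) 1} ∪
        ⋃ c ∈ {c : Fin m | c ≠ a ∧ c ≠ b}, lam [c] '' (Chat r a b x 0 : Set (Cochain m)))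
  | n + 2 => Submodule.span ℂ
      ((⋃ c ∈ {c : Fin m | c ≠ a ∧ c ≠ b},
          lam [c] '' (Chat r a b x (n + 1) : Set (Cochain m))) ∪
        (theta a b '' (Chat r a b x n : Set (Cochain m))) ∪
        ⋃ c ∈ {c : Fin m | c ≠ a ∧ c ≠ b},
          (lam [a] + rho r [a]) '' (lam [c] '' (Chat r a b x n : Set (Cochain m))))


section Helpers

variable {r m : ℕ}

lemma ext_basis {f g : Cochain m →ₗ[ℂ] Cochain m}
    (h : ∀ I x, f (Finsupp.single (I, x) 1) = g (Finsupp.single (I, x) 1)) : f = g := by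
  apply Finsupp.lhom_ext
  rintro ⟨I, x⟩ c
  have : (Finsupp.single (I, x) c : Cochain m) = c • Finsupp.single (I, x) 1 := by simp
  rw [this, map_smul, map_smul, h]

lemma lam_single (J I : List (Fin m)) (x : Fin m) :
    lam J (Finsupp.single (I, x) 1) = Finsupp.single (J ++ I, x) 1 := by
  simp [lam]

lemma twist_single (I : List (Fin m)) (x : Fin m) :
    twist r (Finsupp.single (I, x) 1) = ((-1 : ℂ) ^ (ppar r (I, x))) • Finsupp.single (I, x) 1 := by
  simp [twist]

lemma rho_single (a : Fin m) (ha : par r a = 0) (I : List (Fin m)) (x : Fin m) :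
    rho r [a] (Finsupp.single (I, x) 1) = Finsupp.single (I ++ [a], x) 1 := by
  simp [rho, lpar, ha]

/-- The part of the coboundary that keeps the output. -/
noncomputable def Del (r : ℕ) {m : ℕ} (a b : Fin m) : Cochain m →ₗ[ℂ] Cochain m :=
  - (((comp r).flip (dd a b)) ∘ₗ twist r)

lemma comp_single (p q : List (Fin m) × Fin m) :
    comp r (Finsupp.single p 1) (Finsupp.single q 1) = basisComp r p q := by
  simp [comp]

lemma Del_single (a b : Fin m) (I : List (Fin m)) (x : Fin m) :
    Del r a b (Finsupp.single (I, x) 1) =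
      - ((-1 : ℂ) ^ (ppar r (I, x))) • basisComp r (I, x) ([a, a], b) := by
  simp only [Del, LinearMap.neg_apply, LinearMap.comp_apply, twist_single, map_smul,
    LinearMap.flip_apply, dd, comp_single, neg_smul]

lemma Del_nil (a b x : Fin m) : Del r a b (Finsupp.single ([], x) 1) = 0 := by
  rw [Del_single]
  simp [basisComp]

lemma basisComp_cons (a b : Fin m) (ha : par r a = 0) (hb : par r b = 1)
    (c : Fin m) (I : List (Fin m)) (x : Fin m) :
    basisComp r (c :: I, x) ([a, a], b) =
      (if c = b then - Finsupp.single (a :: a :: I, x) (1 : ℂ) else 0) +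
      ((-1 : ℂ) ^ (par r c)) • lam [c] (basisComp r (I, x) ([a, a], b)) := by
  have hp : ppar r (([a, a], b) : List (Fin m) × Fin m) = 1 := by simp [ppar, lpar, ha, hb]
  unfold basisComp
  simp only [hp, mul_one]
  rw [show (∑ k : Fin (c :: I, x).1.length, _ : Cochain m) = _ from
    Fin.sum_univ_succ (n := I.length) _]
  congr 1
  · by_cases h : c = b
    · subst h
      simp [insertAt, lpar, hb]
    · simp [h]
  · rw [map_sum, Finset.smul_sum]
    apply Finset.sum_congr rfl
    intro k _
    have e : (c :: I).get (Fin.succ k) = I.get k := rfl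
    simp only [e]
    by_cases h : I.get k = b
    · rw [if_pos h, if_pos h, map_smul, lam_single, smul_smul, ← pow_add]
      simp [insertAt, lpar]
    · rw [if_neg h, if_neg h]; simp

lemma ppar_cons (c : Fin m) (I : List (Fin m)) (x : Fin m) :
    ppar r (c :: I, x) = par r c + ppar r (I, x) := by
  simp [ppar, lpar, add_assoc]

variable {a b : Fin m}

lemma Del_lam (ha : par r a = 0) (hb : par r b = 1) {c : Fin m} (hc : c ≠ b) (u : Cochain m) :
    Del r a b (lam [c] u) = lam [c] (Del r a b u) := by
  have : Del r a b ∘ₗ lam [c] = lam [c] ∘ₗ Del r a b := by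
    apply ext_basis
    intro I x
    simp only [LinearMap.comp_apply, lam_single, Del_single, List.singleton_append, map_smul]
    rw [basisComp_cons a b ha hb, if_neg hc, zero_add, smul_smul, ppar_cons, pow_add]
    congr 1
    have : ((-1 : ℂ) ^ par r c) * ((-1 : ℂ) ^ par r c) = 1 := by
      rw [← mul_pow]; simp
    linear_combination (-(-1 : ℂ) ^ ppar r (I, x)) * this
  exact LinearMap.congr_fun this u

lemma Del_lam_b (ha : par r a = 0) (hb : par r b = 1) (u : Cochain m) :
    Del r a b (lam [b] u) = lam [b] (Del r a b u) - lam [a] (lam [a] (twist r u)) := by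
  have : Del r a b ∘ₗ lam [b] = lam [b] ∘ₗ Del r a b - lam [a] ∘ₗ lam [a] ∘ₗ twist r := by
    apply ext_basis
    intro I x
    simp only [LinearMap.comp_apply, LinearMap.sub_apply, lam_single, Del_single, twist_single,
      List.singleton_append, map_smul]
    rw [basisComp_cons a b ha hb, if_pos rfl, ppar_cons, hb, pow_add]
    module
  exact LinearMap.congr_fun this u

lemma twist_twist (u : Cochain m) : twist r (twist r u) = u := by
  have : twist r ∘ₗ twist r = (LinearMap.id : Cochain m →ₗ[ℂ] Cochain m) := by
    apply ext_basis
    intro I x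
    simp only [LinearMap.comp_apply, twist_single, map_smul, smul_smul, LinearMap.id_apply]
    rw [← mul_pow]; simp
  exact LinearMap.congr_fun this u

lemma twist_lam (c : Fin m) (u : Cochain m) :
    twist r (lam [c] u) = ((-1 : ℂ) ^ par r c) • lam [c] (twist r u) := by
  have : twist r ∘ₗ lam [c] = ((-1 : ℂ) ^ par r c) • (lam [c] ∘ₗ twist r) := by
    apply ext_basis
    intro I x
    simp only [LinearMap.comp_apply, LinearMap.smul_apply, twist_single, lam_single, map_smul,
      smul_smul, List.singleton_append, ppar_cons, pow_add]
  exact LinearMap.congr_fun this u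

lemma Del_twist (ha : par r a = 0) (hb : par r b = 1) (u : Cochain m) :
    Del r a b (twist r u) = - twist r (Del r a b u) := by
  have : Del r a b ∘ₗ twist r = - (twist r ∘ₗ Del r a b) := by
    apply ext_basis
    intro I x
    simp only [LinearMap.comp_apply, LinearMap.neg_apply]
    induction I with
    | nil => rw [twist_single, map_smul, Del_nil]; simp
    | cons c I ih =>
      rw [← List.singleton_append, ← lam_single, twist_lam, map_smul]
      by_cases hc : c = b
      · subst hc
        simp only [Del_lam_b ha hb, map_sub, twist_lam, ih, ha, hb, twist_twist, map_smul, map_neg]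
        module
      · simp only [Del_lam ha hb hc, ih, twist_lam, map_neg, smul_neg]
  exact LinearMap.congr_fun this u

lemma rho_lam (ha : par r a = 0) (c : Fin m) (u : Cochain m) :
    rho r [a] (lam [c] u) = lam [c] (rho r [a] u) := by
  have : rho r [a] ∘ₗ lam [c] = lam [c] ∘ₗ rho r [a] := by
    apply ext_basis
    intro I x
    simp only [LinearMap.comp_apply, rho_single a ha, lam_single, List.append_assoc]
  exact LinearMap.congr_fun this u

lemma twist_rho (ha : par r a = 0) (u : Cochain m) :
    twist r (rho r [a] u) = rho r [a] (twist r u) := by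
  have : twist r ∘ₗ rho r [a] = rho r [a] ∘ₗ twist r := by
    apply ext_basis
    intro I x
    simp only [LinearMap.comp_apply, rho_single a ha, twist_single, map_smul]
    simp [ppar, lpar, ha]
  exact LinearMap.congr_fun this u

lemma Del_rho (ha : par r a = 0) (hb : par r b = 1) (hab : a ≠ b) (u : Cochain m) :
    Del r a b (rho r [a] u) = rho r [a] (Del r a b u) := by
  have : Del r a b ∘ₗ rho r [a] = rho r [a] ∘ₗ Del r a b := by
    apply ext_basis
    intro I x
    simp only [LinearMap.comp_apply]
    induction I with
    | nil =>
      rw [rho_single a ha, Del_nil, List.nil_append, ← List.append_nil [a], ← lam_single,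
        Del_lam ha hb hab, Del_nil]; simp
    | cons c I ih =>
      have e : (Finsupp.single (c :: I, x) (1 : ℂ) : Cochain m)
          = lam [c] (Finsupp.single (I, x) 1) := by rw [lam_single]; rfl
      rw [e, rho_lam ha]
      by_cases hc : c = b
      · subst hc
        simp only [Del_lam_b ha hb, map_sub, twist_rho ha, rho_lam ha, ih]
      · simp only [Del_lam ha hb hc, ih, rho_lam ha]
  exact LinearMap.congr_fun this u

/-- Strip the first letter if it is `c`. -/
noncomputable def tl (c : Fin m) : Cochain m →ₗ[ℂ] Cochain m :=
  Finsupp.lsum ℂ fun p => LinearMap.toSpanSingleton ℂ (Cochain m)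
    (if p.1.head? = some c then Finsupp.single (p.1.tail, p.2) (1 : ℂ) else 0)

lemma tl_nil (c x : Fin m) : tl c (Finsupp.single ([], x) 1) = 0 := by simp [tl]

lemma tl_lam (c d : Fin m) (u : Cochain m) :
    tl c (lam [d] u) = if d = c then u else 0 := by
  have : tl c ∘ₗ lam [d] = if d = c then (LinearMap.id : Cochain m →ₗ[ℂ] Cochain m) else 0 := by
    apply ext_basis
    intro I x
    rw [LinearMap.comp_apply, lam_single]
    by_cases h : d = c <;> simp [tl, h]
  have := LinearMap.congr_fun this u
  rw [LinearMap.comp_apply] at this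
  rw [this]
  split_ifs <;> rfl

lemma tl_lam_self (c : Fin m) (u : Cochain m) : tl c (lam [c] u) = u := by simp [tl_lam]

lemma tl_lam_ne {c d : Fin m} (h : d ≠ c) (u : Cochain m) : tl c (lam [d] u) = 0 := by
  simp [tl_lam, h]

lemma tl_Del (ha : par r a = 0) (hb : par r b = 1) {c : Fin m} (hc : c ≠ a) (u : Cochain m) :
    tl c (Del r a b u) = Del r a b (tl c u) := by
  have : tl c ∘ₗ Del r a b = Del r a b ∘ₗ tl c := by
    apply ext_basis
    intro I x
    simp only [LinearMap.comp_apply]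
    cases I with
    | nil => simp [tl_nil, Del_nil]
    | cons d I =>
      rw [← List.singleton_append, ← lam_single]
      by_cases hd : d = b
      · subst hd
        rw [Del_lam_b ha hb, map_sub, tl_lam_ne hc.symm, sub_zero, tl_lam, tl_lam]
        split_ifs <;> simp
      · rw [Del_lam ha hb hd, tl_lam, tl_lam]
        split_ifs <;> simp
  exact LinearMap.congr_fun this u

lemma tl_a_Del (ha : par r a = 0) (hb : par r b = 1) (hab : a ≠ b) (u : Cochain m) :
    tl a (Del r a b u) = Del r a b (tl a u) - lam [a] (twist r (tl b u)) := by
  have : tl a ∘ₗ Del r a b = Del r a b ∘ₗ tl a - lam [a] ∘ₗ twist r ∘ₗ tl b := by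
    apply ext_basis
    intro I x
    simp only [LinearMap.comp_apply, LinearMap.sub_apply]
    cases I with
    | nil => simp [tl_nil, Del_nil]
    | cons d I =>
      rw [← List.singleton_append, ← lam_single]
      by_cases hd : d = b
      · subst hd
        rw [Del_lam_b ha hb, map_sub, tl_lam_ne hab.symm, tl_lam_self, tl_lam_ne hab.symm,
          tl_lam_self]; simp
      · rw [Del_lam ha hb hd, tl_lam_ne hd, tl_lam, tl_lam]
        split_ifs <;> simp
  exact LinearMap.congr_fun this u

/-! degrees -/

lemma single_mem_Cnx (I : List (Fin m)) (x : Fin m) {n : ℕ} (h : I.length = n) :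
    Finsupp.single (I, x) 1 ∈ Cnx m n x := Submodule.subset_span ⟨I, h, rfl⟩

lemma Cnx_map {n k : ℕ} {x : Fin m} {f : Cochain m →ₗ[ℂ] Cochain m}
    (h : ∀ I : List (Fin m), I.length = n → f (Finsupp.single (I, x) 1) ∈ Cnx m k x)
    {u : Cochain m} (hu : u ∈ Cnx m n x) : f u ∈ Cnx m k x := by
  have : Cnx m n x ≤ (Cnx m k x).comap f := by
    refine Submodule.span_le.2 ?_
    rintro _ ⟨I, hI, rfl⟩
    exact h I hI
  exact this hu

lemma lam_mem {n : ℕ} {x : Fin m} (c : Fin m) {u : Cochain m} (hu : u ∈ Cnx m n x) :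
    lam [c] u ∈ Cnx m (n + 1) x := by
  refine Cnx_map (fun I hI => ?_) hu
  rw [lam_single]
  exact single_mem_Cnx _ _ (by simp [hI])

lemma rho_mem (ha : par r a = 0) {n : ℕ} {x : Fin m} {u : Cochain m} (hu : u ∈ Cnx m n x) :
    rho r [a] u ∈ Cnx m (n + 1) x := by
  refine Cnx_map (fun I hI => ?_) hu
  rw [rho_single a ha]
  exact single_mem_Cnx _ _ (by simp [hI])

lemma twist_mem {n : ℕ} {x : Fin m} {u : Cochain m} (hu : u ∈ Cnx m n x) :
    twist r u ∈ Cnx m n x := by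
  refine Cnx_map (fun I hI => ?_) hu
  rw [twist_single]
  exact Submodule.smul_mem _ _ (single_mem_Cnx _ _ hI)

lemma tl_mem {n : ℕ} {x : Fin m} (c : Fin m) {u : Cochain m} (hu : u ∈ Cnx m (n + 1) x) :
    tl c u ∈ Cnx m n x := by
  refine Cnx_map (fun I hI => ?_) hu
  cases I with
  | nil => simp at hI
  | cons d I =>
    rw [← List.singleton_append, ← lam_single, tl_lam]
    split_ifs
    · exact single_mem_Cnx _ _ (by simpa using hI)
    · exact zero_mem _

lemma Cnx_zero {x : Fin m} {u : Cochain m} (hu : u ∈ Cnx m 0 x) :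
    ∃ t : ℂ, u = t • Finsupp.single ([], x) 1 := by
  have : Cnx m 0 x ≤ Submodule.span ℂ {Finsupp.single ([], x) 1} := by
    refine Submodule.span_le.2 ?_
    rintro _ ⟨I, hI, rfl⟩
    rw [List.length_eq_zero_iff] at hI
    subst hI
    exact Submodule.subset_span rfl
  obtain ⟨t, ht⟩ := Submodule.mem_span_singleton.1 (this hu)
  exact ⟨t, ht.symm⟩

lemma Del_Cnx_zero {x : Fin m} {u : Cochain m} (hu : u ∈ Cnx m 0 x) : Del r a b u = 0 := by
  obtain ⟨t, rfl⟩ := Cnx_zero hu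
  rw [map_smul, Del_nil, smul_zero]

lemma tl_Cnx_zero {x : Fin m} (c : Fin m) {u : Cochain m} (hu : u ∈ Cnx m 0 x) : tl c u = 0 := by
  obtain ⟨t, rfl⟩ := Cnx_zero hu
  rw [map_smul, tl_nil, smul_zero]

/-- other letters -/
abbrev Oth (a b : Fin m) : Type := {c : Fin m // c ≠ a ∧ c ≠ b}

lemma decomp (hab : a ≠ b) {n : ℕ} {x : Fin m} {u : Cochain m} (hu : u ∈ Cnx m (n + 1) x) :
    u = lam [a] (tl a u) + lam [b] (tl b u) + ∑ c : Oth a b, lam [c.1] (tl c.1 u) := by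
  let f : Cochain m →ₗ[ℂ] Cochain m :=
    lam [a] ∘ₗ tl a + lam [b] ∘ₗ tl b + ∑ c : Oth a b, lam [c.1] ∘ₗ tl c.1
  have hf : ∀ v, f v = lam [a] (tl a v) + lam [b] (tl b v)
      + ∑ c : Oth a b, lam [c.1] (tl c.1 v) := by
    intro v; simp [f, LinearMap.sum_apply]
  have : Set.EqOn (LinearMap.id : Cochain m →ₗ[ℂ] Cochain m) f (Cnx m (n + 1) x) := by
    refine LinearMap.eqOn_span ?_
    rintro _ ⟨I, hI, rfl⟩
    cases I with
    | nil => simp at hI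
    | cons d I =>
      rw [← List.singleton_append, ← lam_single, hf, LinearMap.id_apply]
      generalize (Finsupp.single (I, x) (1 : ℂ) : Cochain m) = v
      by_cases h1 : d = a
      · subst h1
        rw [tl_lam_self, tl_lam_ne hab, Finset.sum_eq_zero]
        · simp
        · intro c _
          rw [tl_lam_ne c.2.1.symm, map_zero]
      by_cases h2 : d = b
      · subst h2
        rw [tl_lam_self, tl_lam_ne h1, Finset.sum_eq_zero]
        · simp
        · intro c _
          rw [tl_lam_ne c.2.2.symm, map_zero]
      rw [tl_lam_ne h1, tl_lam_ne h2, Finset.sum_eq_single (⟨d, h1, h2⟩ : Oth a b)]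
      · simp [tl_lam_self]
      · intro c _ hc
        rw [tl_lam_ne, map_zero]
        intro h
        exact hc (Subtype.ext h.symm)
      · simp
  have := this hu
  rwa [LinearMap.id_apply, hf] at this

lemma theta_apply (u : Cochain m) :
    theta a b u = lam [a] (lam [b] u) - lam [b] (lam [a] u) := by
  have : theta a b = lam [a] ∘ₗ lam [b] - lam [b] ∘ₗ lam [a] := by
    apply ext_basis
    intro I x
    simp [theta, LinearMap.sub_apply, lam_single]
  rw [this]; rfl

lemma Del_theta (ha : par r a = 0) (hb : par r b = 1) (hab : a ≠ b) (u : Cochain m) :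
    Del r a b (theta a b u) = theta a b (Del r a b u) := by
  simp only [theta_apply, map_sub, Del_lam ha hb hab, Del_lam_b ha hb, twist_lam, ha, pow_zero,
    one_smul]
  abel

/-! cocycles -/

lemma cocycle_form (ha : par r a = 0) (hb : par r b = 1) (hab : a ≠ b) {n : ℕ} {x : Fin m}
    {z : Cochain m} (hz : z ∈ Cnx m (n + 2) x) (hD : Del r a b z = 0) :
    ∃ (u v : Oth a b → Cochain m) (w y : Cochain m),
      (∀ c, u c ∈ Cnx m (n + 1) x ∧ Del r a b (u c) = 0) ∧
      (∀ c, v c ∈ Cnx m n x ∧ Del r a b (v c) = 0) ∧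
      (w ∈ Cnx m n x ∧ Del r a b w = 0) ∧ y ∈ Cnx m n x ∧
      z = ∑ c : Oth a b, lam [c.1] (u c) + theta a b w + ∑ c : Oth a b, lam [a] (lam [c.1] (v c))
        - Del r a b (lam [b] y) := by
  have h1 := tl_a_Del ha hb hab z
  rw [hD, map_zero] at h1
  have h2 : Del r a b (tl a z) = lam [a] (twist r (tl b z)) := (sub_eq_zero.1 h1.symm)
  have h3 := tl_a_Del ha hb hab (tl a z)
  rw [h2, tl_lam_self] at h3
  have hmem := tl_mem a hz
  refine ⟨fun c => tl c.1 z, fun c => tl c.1 (tl a z), tl b (tl a z), twist r (tl a (tl a z)),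
    fun c => ⟨tl_mem _ hz, ?_⟩, fun c => ⟨tl_mem _ hmem, ?_⟩, ⟨tl_mem _ hmem, ?_⟩,
    twist_mem (tl_mem _ hmem), ?_⟩
  · rw [← tl_Del ha hb c.2.1, hD, map_zero]
  · rw [← tl_Del ha hb c.2.1, h2, tl_lam_ne c.2.1.symm]
  · rw [← tl_Del ha hb hab.symm, h2, tl_lam_ne hab]
  · have h4 := congrArg (twist r) h3
    rw [twist_twist, map_sub, twist_lam, ha, pow_zero, one_smul, twist_twist] at h4
    have d1 := decomp hab hz
    have d2 := congrArg (lam [a]) (decomp hab hmem)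
    rw [map_add, map_add, map_sum] at d2
    rw [Del_lam_b ha hb, twist_twist, Del_twist ha hb, theta_apply]
    rw [d2] at d1
    have h5 := congrArg (lam [b]) h4
    rw [map_sub] at h5
    rw [h5] at d1
    rw [map_neg]
    calc z = _ := d1
      _ = _ := by abel

lemma Del_mem (ha : par r a = 0) (hb : par r b = 1) {n : ℕ} {x : Fin m} {u : Cochain m}
    (hu : u ∈ Cnx m n x) : Del r a b u ∈ Cnx m (n + 1) x := by
  refine Cnx_map (fun I hI => ?_) hu
  induction I generalizing n u with
  | nil => rw [Del_nil]; exact zero_mem _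
  | cons c I ih =>
    have e : (Finsupp.single (c :: I, x) (1 : ℂ) : Cochain m)
          = lam [c] (Finsupp.single (I, x) 1) := by rw [lam_single]; rfl
    subst hI
    have h0 : (Finsupp.single (I, x) (1 : ℂ) : Cochain m) ∈ Cnx m I.length x :=
      single_mem_Cnx I x rfl
    have h1 := ih h0 rfl
    rw [e]
    by_cases hc : c = b
    · subst hc
      rw [Del_lam_b ha hb]
      exact sub_mem (lam_mem _ h1) (lam_mem _ (lam_mem _ (twist_mem h0)))
    · rw [Del_lam ha hb hc]
      exact lam_mem _ h1

lemma projOut_single (y x : Fin m) (I : List (Fin m)) :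
    projOut y (Finsupp.single (I, x) 1) = if x = y then Finsupp.single (I, x) 1 else 0 := by
  simp [projOut]

lemma projOut_mem {n : ℕ} {x : Fin m} {u : Cochain m} (hu : u ∈ Cnx m n x) : projOut x u = u := by
  have : Set.EqOn (projOut x) (LinearMap.id : Cochain m →ₗ[ℂ] Cochain m) (Cnx m n x) := by
    refine LinearMap.eqOn_span ?_
    rintro _ ⟨I, hI, rfl⟩
    simp [projOut_single]
  exact this hu

lemma Dx_eq (ha : par r a = 0) (hb : par r b = 1) (hab : a ≠ b) {x : Fin m} {n : ℕ}
    {u : Cochain m} (hu : u ∈ Cnx m n x) :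
    Dx r a b x u = Del r a b u := by
  have key : Dop r a b u = comp r (dd a b) u + Del r a b u := by
    simp [Dop, Del, sub_eq_add_neg]
  unfold Dx
  split_ifs with h
  · subst h
    rw [LinearMap.comp_apply, key, map_add, projOut_mem (Del_mem ha hb hu)]
    have : Set.EqOn (projOut x ∘ₗ comp r (dd x b)) (0 : Cochain m →ₗ[ℂ] Cochain m)
        (Cnx m n x) := by
      refine LinearMap.eqOn_span ?_
      rintro _ ⟨I, hI, rfl⟩
      simp only [LinearMap.comp_apply, dd, comp_single, basisComp, map_sum, LinearMap.zero_apply]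
      refine Finset.sum_eq_zero fun k _ => ?_
      split_ifs
      · rw [map_smul, projOut_single, if_neg hab.symm, smul_zero]
      · simp
    have := this hu
    simp only [LinearMap.comp_apply, LinearMap.zero_apply] at this
    rw [this, zero_add]
  · rw [key]
    have : Set.EqOn (comp r (dd a b)) (0 : Cochain m →ₗ[ℂ] Cochain m) (Cnx m n x) := by
      refine LinearMap.eqOn_span ?_
      rintro _ ⟨I, hI, rfl⟩
      simp only [dd, comp_single, basisComp, LinearMap.zero_apply]
      refine Finset.sum_eq_zero fun k _ => ?_
      rw [if_neg]
      have hk : ∀ k : Fin [a, a].length, [a, a].get k = a := by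
        intro k; fin_cases k <;> rfl
      intro h'
      exact h (h'.symm.trans (hk k))
    have := this hu
    rw [this, LinearMap.zero_apply, zero_add]

lemma mem_Zx (ha : par r a = 0) (hb : par r b = 1) (hab : a ≠ b) {x : Fin m} {n : ℕ}
    {u : Cochain m} : u ∈ Zx r a b x n ↔ u ∈ Cnx m n x ∧ Del r a b u = 0 := by
  unfold Zx
  rw [Submodule.mem_inf, LinearMap.mem_ker]
  constructor
  · rintro ⟨h, h'⟩
    exact ⟨h, by rwa [Dx_eq ha hb hab h] at h'⟩
  · rintro ⟨h, h'⟩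
    exact ⟨h, by rwa [Dx_eq ha hb hab h]⟩

lemma mem_Bx (ha : par r a = 0) (hb : par r b = 1) (hab : a ≠ b) {x : Fin m} {n : ℕ}
    {u : Cochain m} : u ∈ Bx r a b x (n + 1) ↔ ∃ y ∈ Cnx m n x, Del r a b y = u := by
  rw [Bx, Submodule.mem_map]
  constructor
  · rintro ⟨y, h, h'⟩
    exact ⟨y, h, by rwa [Dx_eq ha hb hab h] at h'⟩
  · rintro ⟨y, h, h'⟩
    exact ⟨y, h, by rwa [Dx_eq ha hb hab h]⟩

lemma Bx_map (ha : par r a = 0) (hb : par r b = 1) (hab : a ≠ b) {x : Fin m} {n k : ℕ}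
    (f : Cochain m →ₗ[ℂ] Cochain m) (hf : ∀ n, ∀ u ∈ Cnx m n x, f u ∈ Cnx m (n + k) x)
    (hfD : ∀ u, Del r a b (f u) = f (Del r a b u))
    {u : Cochain m} (hu : u ∈ Bx r a b x n) : f u ∈ Bx r a b x (n + k) := by
  cases n with
  | zero =>
    have : u = 0 := by simpa [Bx] using hu
    rw [this, map_zero]; exact zero_mem _
  | succ n =>
    obtain ⟨y, hy, rfl⟩ := (mem_Bx ha hb hab).1 hu
    rw [show n + 1 + k = (n + k) + 1 by omega, mem_Bx ha hb hab]
    exact ⟨f y, hf _ _ hy, hfD y⟩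

lemma theta_mem {n : ℕ} {x : Fin m} {u : Cochain m} (hu : u ∈ Cnx m n x) :
    theta a b u ∈ Cnx m (n + 2) x := by
  rw [theta_apply]
  exact sub_mem (lam_mem _ (lam_mem _ hu)) (lam_mem _ (lam_mem _ hu))

lemma tl_B (ha : par r a = 0) (hb : par r b = 1) (hab : a ≠ b) {x : Fin m} {n : ℕ} {c : Fin m}
    (hc : c ≠ a) {y : Cochain m} (hy : y ∈ Cnx m n x) :
    tl c (Del r a b y) ∈ Bx r a b x n := by
  rw [tl_Del ha hb hc]
  cases n with
  | zero => rw [tl_Cnx_zero c hy, map_zero]; exact zero_mem _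
  | succ n => exact (mem_Bx ha hb hab).2 ⟨_, tl_mem c hy, rfl⟩

/-- The parametrization of `Chat (n+2)`. -/
noncomputable def Phi (r : ℕ) (a b : Fin m) :
    ((Oth a b → Cochain m) × Cochain m × (Oth a b → Cochain m)) →ₗ[ℂ] Cochain m :=
  (∑ c : Oth a b, lam [c.1] ∘ₗ LinearMap.proj c).coprod
    ((theta a b).coprod (∑ c : Oth a b, (lam [a] + rho r [a]) ∘ₗ lam [c.1] ∘ₗ LinearMap.proj c))

lemma Phi_apply (u v : Oth a b → Cochain m) (w : Cochain m) :
    Phi r a b (u, w, v) = ∑ c : Oth a b, lam [c.1] (u c) + (theta a b w +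
      ∑ c : Oth a b, (lam [a] + rho r [a]) (lam [c.1] (v c))) := by
  simp [Phi, LinearMap.sum_apply]

lemma tl_sum_lam (c : Oth a b) (u : Oth a b → Cochain m) :
    tl c.1 (∑ c : Oth a b, lam [c.1] (u c)) = u c := by
  rw [map_sum, Finset.sum_eq_single c]
  · rw [tl_lam_self]
  · intro d _ hd
    exact tl_lam_ne (fun h => hd (Subtype.ext h)) _
  · simp

lemma tl_sum_lam_ne {d : Fin m} (hd : d = a ∨ d = b) (u : Oth a b → Cochain m) :
    tl d (∑ c : Oth a b, lam [c.1] (u c)) = 0 := by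
  rw [map_sum]
  refine Finset.sum_eq_zero fun c _ => tl_lam_ne ?_ _
  rcases hd with rfl | rfl
  · exact c.2.1
  · exact c.2.2

lemma Phi_apply' (ha : par r a = 0) (u v : Oth a b → Cochain m) (w : Cochain m) :
    Phi r a b (u, w, v) = ∑ c : Oth a b, lam [c.1] (u c) +
      (lam [a] (lam [b] w) - lam [b] (lam [a] w)) +
      (lam [a] (∑ c : Oth a b, lam [c.1] (v c)) + ∑ c : Oth a b, lam [c.1] (rho r [a] (v c))) := by
  rw [Phi_apply, theta_apply]
  simp only [LinearMap.add_apply, Finset.sum_add_distrib, rho_lam ha, map_sum]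
  abel

lemma tl_a_Phi (ha : par r a = 0) (hab : a ≠ b) (u v : Oth a b → Cochain m) (w : Cochain m) :
    tl a (Phi r a b (u, w, v)) = lam [b] w + ∑ c : Oth a b, lam [c.1] (v c) := by
  rw [Phi_apply' ha]
  simp only [map_add, map_sub, tl_lam_self, tl_sum_lam_ne (Or.inl rfl), tl_lam_ne hab.symm]
  simp

lemma tl_c_Phi (ha : par r a = 0) (c : Oth a b) (u v : Oth a b → Cochain m)
    (w : Cochain m) :
    tl c.1 (Phi r a b (u, w, v)) = u c + rho r [a] (v c) := by
  rw [Phi_apply' ha]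
  simp only [map_add, map_sub, tl_sum_lam, tl_lam_ne c.2.1.symm, tl_lam_ne c.2.2.symm]
  simp

lemma Chat_succ (r : ℕ) (a b x : Fin m) (n : ℕ) :
    Chat r a b x (n + 2) = (((Submodule.pi Set.univ fun _ : Oth a b => Chat r a b x (n + 1)).prod
      ((Chat r a b x n).prod (Submodule.pi Set.univ fun _ : Oth a b => Chat r a b x n))).map
        (Phi r a b)) := by
  rw [Chat]
  apply le_antisymm
  · refine Submodule.span_le.2 ?_
    rintro z ((hz | ⟨w, hw, rfl⟩) | hz)
    · simp only [Set.mem_iUnion] at hz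
      obtain ⟨c, hc, u, hu, rfl⟩ := hz
      refine ⟨(Pi.single (⟨c, hc⟩ : Oth a b) u, 0, 0), ⟨?_, zero_mem _, zero_mem _⟩, ?_⟩
      · intro d _
        by_cases h : d = ⟨c, hc⟩
        · subst h; simpa using hu
        · simp [Pi.single_eq_of_ne h]
      · rw [Phi_apply, Finset.sum_eq_single (⟨c, hc⟩ : Oth a b)]
        · simp
        · intro d _ h; simp [Pi.single_eq_of_ne h]
        · simp
    · refine ⟨(0, w, 0), ⟨zero_mem _, hw, zero_mem _⟩, ?_⟩
      simp [Phi_apply]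
    · simp only [Set.mem_iUnion] at hz
      obtain ⟨c, hc, _, ⟨u, hu, rfl⟩, rfl⟩ := hz
      refine ⟨(0, 0, Pi.single (⟨c, hc⟩ : Oth a b) u), ⟨zero_mem _, zero_mem _, ?_⟩, ?_⟩
      · intro d _
        by_cases h : d = ⟨c, hc⟩
        · subst h; simpa using hu
        · simp [Pi.single_eq_of_ne h]
      · rw [Phi_apply, Finset.sum_eq_single (a := (⟨c, hc⟩ : Oth a b))
          (f := fun c' : Oth a b => (lam [a] + rho r [a]) (lam [c'.1] _))]
        · simp
        · intro d _ h; simp [Pi.single_eq_of_ne h]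
        · simp
  · rintro _ ⟨⟨u, w, v⟩, ⟨hu, hw, hv⟩, rfl⟩
    rw [Phi_apply]
    refine add_mem (sum_mem fun c _ => ?_) (add_mem ?_ (sum_mem fun c _ => ?_))
    · refine Submodule.subset_span (Or.inl (Or.inl ?_))
      simp only [Set.mem_iUnion]
      exact ⟨c.1, c.2, u c, hu c trivial, rfl⟩
    · exact Submodule.subset_span (Or.inl (Or.inr ⟨w, hw, rfl⟩))
    · refine Submodule.subset_span (Or.inr ?_)
      simp only [Set.mem_iUnion]
      exact ⟨c.1, c.2, _, ⟨v c, hv c trivial, rfl⟩, rfl⟩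

lemma Phi_inj (ha : par r a = 0) (hab : a ≠ b) : Function.Injective (Phi r a b) := by
  rw [← LinearMap.ker_eq_bot, LinearMap.ker_eq_bot']
  rintro ⟨u, w, v⟩ h
  have h1 := tl_a_Phi ha hab u v w
  rw [h, map_zero] at h1
  have hw : w = 0 := by
    have := congrArg (tl b) h1
    rw [map_zero, map_add, tl_lam_self, tl_sum_lam_ne (Or.inr rfl), add_zero] at this
    exact this.symm
  have hv : v = 0 := by
    funext c
    have := congrArg (tl c.1) h1
    rw [map_zero, map_add, tl_lam_ne c.2.2.symm, tl_sum_lam, zero_add] at this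
    exact this.symm
  have hu : u = 0 := by
    funext c
    have := tl_c_Phi ha c u v w
    rw [h, map_zero, hv] at this
    simpa using this.symm
  rw [hu, hv, hw]; rfl

/-- The parametrization of `Chat 1`. -/
noncomputable def Psi (a b x : Fin m) : (ℂ × (Oth a b → ℂ)) →ₗ[ℂ] Cochain m :=
  (LinearMap.toSpanSingleton ℂ _ (Finsupp.single ([a], x) 1)).coprod
    (∑ c : Oth a b, LinearMap.toSpanSingleton ℂ _ (Finsupp.single ([c.1], x) 1) ∘ₗ
      LinearMap.proj c)

lemma Psi_apply (x : Fin m) (t : ℂ) (v : Oth a b → ℂ) :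
    Psi a b x (t, v) = t • Finsupp.single ([a], x) 1 +
      ∑ c : Oth a b, v c • Finsupp.single ([c.1], x) 1 := by
  simp [Psi, LinearMap.sum_apply]

lemma single_one (c x : Fin m) :
    (Finsupp.single ([c], x) (1 : ℂ) : Cochain m) = lam [c] (Finsupp.single ([], x) 1) := by
  rw [lam_single]; rfl

lemma Psi_apply' (x : Fin m) (t : ℂ) (v : Oth a b → ℂ) :
    Psi a b x (t, v) = lam [a] (t • Finsupp.single ([], x) 1) +
      ∑ c : Oth a b, lam [c.1] (v c • Finsupp.single ([], x) 1) := by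
  simp only [Psi_apply, single_one, map_smul]

lemma Psi_inj (x : Fin m) : Function.Injective (Psi a b x) := by
  have h0 : (Finsupp.single (([] : List (Fin m)), x) (1 : ℂ) : Cochain m) ≠ 0 := by simp
  rw [← LinearMap.ker_eq_bot, LinearMap.ker_eq_bot']
  rintro ⟨t, v⟩ h
  rw [Psi_apply'] at h
  have ht : t = 0 := by
    have := congrArg (tl a) h
    rw [map_zero, map_add, tl_lam_self, tl_sum_lam_ne (Or.inl rfl), add_zero] at this
    exact (smul_eq_zero.1 this).resolve_right h0
  have hv : v = 0 := by
    funext c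
    have := congrArg (tl c.1) h
    rw [map_zero, map_add, tl_lam_ne c.2.1.symm, zero_add,
      tl_sum_lam c (fun c => v c • Finsupp.single ([], x) 1)] at this
    exact (smul_eq_zero.1 this).resolve_right h0
  rw [ht, hv]; rfl

lemma Chat_one (r : ℕ) (a b x : Fin m) : Chat r a b x 1 = LinearMap.range (Psi a b x) := by
  rw [Chat]
  apply le_antisymm
  · refine Submodule.span_le.2 ?_
    rintro z (hz | hz)
    · rw [Set.mem_singleton_iff] at hz
      subst hz
      exact ⟨(1, 0), by simp [Psi_apply]⟩
    · simp only [Set.mem_iUnion] at hz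
      obtain ⟨c, hc, u, hu, rfl⟩ := hz
      rw [Chat] at hu
      obtain ⟨t, rfl⟩ := Submodule.mem_span_singleton.1 hu
      refine ⟨(0, Pi.single (⟨c, hc⟩ : Oth a b) t), ?_⟩
      rw [Psi_apply', Finset.sum_eq_single (⟨c, hc⟩ : Oth a b)]
      · simp
      · intro d _ h; simp [Pi.single_eq_of_ne h]
      · simp
  · rintro _ ⟨⟨t, v⟩, rfl⟩
    rw [Psi_apply]
    refine add_mem (Submodule.smul_mem _ _ (Submodule.subset_span (Or.inl rfl)))
      (sum_mem fun c _ => Submodule.smul_mem _ _ (Submodule.subset_span (Or.inr ?_)))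
    simp only [Set.mem_iUnion]
    refine ⟨c.1, c.2, Finsupp.single ([], x) 1, ?_, ?_⟩
    · rw [Chat]; exact Submodule.subset_span rfl
    · rw [lam_single]; rfl

lemma card_Oth (hab : a ≠ b) : Fintype.card (Oth a b) = m - 2 := by
  rw [Fintype.card_subtype]
  have : (Finset.univ.filter fun c : Fin m => c ≠ a ∧ c ≠ b) = Finset.univ \ {a, b} := by
    ext c; simp
  rw [this, Finset.card_sdiff_of_subset (Finset.subset_univ _), Finset.card_pair hab]
  simp

lemma Chat_dim (ha : par r a = 0) (hab : a ≠ b) (hm : 2 ≤ m) (x : Fin m) (n : ℕ) :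
    Module.Finite ℂ (Chat r a b x n) ∧ Module.finrank ℂ (Chat r a b x n) = (m - 1) ^ n := by
  induction n using Nat.strong_induction_on with
  | _ n ih =>
  match n, ih with
  | 0, _ =>
    rw [Chat]
    refine ⟨inferInstance, ?_⟩
    rw [finrank_span_singleton (by simp), pow_zero]
  | 1, _ =>
    rw [Chat_one]
    refine ⟨inferInstance, ?_⟩
    rw [LinearMap.finrank_range_of_inj (Psi_inj x), Module.finrank_prod, Module.finrank_self,
      Module.finrank_fintype_fun_eq_card, card_Oth hab, pow_one]
    omega
  | n + 2, ih =>
    obtain ⟨f0, d0⟩ := ih n (by omega)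
    obtain ⟨f1, d1⟩ := ih (n + 1) (by omega)
    let F : ((Oth a b → Chat r a b x (n + 1)) × Chat r a b x n × (Oth a b → Chat r a b x n))
        →ₗ[ℂ] ((Oth a b → Cochain m) × Cochain m × (Oth a b → Cochain m)) :=
      ((Chat r a b x (n + 1)).subtype.compLeft (Oth a b)).prodMap
        ((Chat r a b x n).subtype.prodMap ((Chat r a b x n).subtype.compLeft (Oth a b)))
    have hF : Function.Injective F := by
      rintro ⟨u, w, v⟩ ⟨u', w', v'⟩ h
      simp only [F, LinearMap.prodMap_apply, Prod.mk.injEq] at h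
      obtain ⟨h1, h2, h3⟩ := h
      have e1 : u = u' := by
        funext c; exact Subtype.ext (congrFun h1 c)
      have e2 : w = w' := Subtype.ext h2
      have e3 : v = v' := by
        funext c; exact Subtype.ext (congrFun h3 c)
      rw [e1, e2, e3]
    have hR : Chat r a b x (n + 2) = LinearMap.range (Phi r a b ∘ₗ F) := by
      rw [Chat_succ, LinearMap.range_comp]
      congr 1
      ext ⟨u, w, v⟩
      constructor
      · rintro ⟨hu, hw, hv⟩
        exact ⟨(fun c => ⟨u c, hu c trivial⟩, ⟨w, hw⟩, fun c => ⟨v c, hv c trivial⟩), rfl⟩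
      · rintro ⟨⟨u', w', v'⟩, h⟩
        simp only [F, LinearMap.prodMap_apply, Prod.mk.injEq] at h
        obtain ⟨rfl, rfl, rfl⟩ := h
        exact ⟨fun c _ => (u' c).2, w'.2, fun c _ => (v' c).2⟩
    rw [hR]
    refine ⟨inferInstance, ?_⟩
    rw [LinearMap.finrank_range_of_inj (by
      rw [LinearMap.coe_comp]; exact (Phi_inj ha hab).comp hF),
      Module.finrank_prod, Module.finrank_prod, Module.finrank_pi_fintype,
      Module.finrank_pi_fintype, d0, d1, Finset.sum_const, Finset.sum_const, Finset.card_univ,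
      card_Oth hab]
    obtain ⟨k, rfl⟩ := Nat.exists_eq_add_of_le hm
    simp only [smul_eq_mul, Nat.add_sub_cancel_left, show 2 + k - 1 = k + 1 by omega]
    ring

lemma main_struct (ha : par r a = 0) (hb : par r b = 1) (hab : a ≠ b) (x : Fin m) (n : ℕ) :
    Chat r a b x n ≤ Zx r a b x n ∧
      (∀ z ∈ Chat r a b x n, z ∈ Bx r a b x n → z = 0) ∧
      Zx r a b x n ≤ Chat r a b x n ⊔ Bx r a b x n := by
  have hl : ∀ c : Oth a b, ∀ n, ∀ u ∈ Zx r a b x n, lam [c.1] u ∈ Zx r a b x (n + 1) := by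
    intro c n u hu
    rw [mem_Zx ha hb hab] at hu ⊢
    exact ⟨lam_mem _ hu.1, by rw [Del_lam ha hb c.2.2, hu.2, map_zero]⟩
  have hrho : ∀ n, ∀ u ∈ Zx r a b x n, rho r [a] u ∈ Zx r a b x (n + 1) := by
    intro n u hu
    rw [mem_Zx ha hb hab] at hu ⊢
    exact ⟨rho_mem ha hu.1, by rw [Del_rho ha hb hab, hu.2, map_zero]⟩
  have hla : ∀ n, ∀ u ∈ Zx r a b x n, lam [a] u ∈ Zx r a b x (n + 1) := by
    intro n u hu
    rw [mem_Zx ha hb hab] at hu ⊢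
    exact ⟨lam_mem _ hu.1, by rw [Del_lam ha hb hab, hu.2, map_zero]⟩
  induction n using Nat.strong_induction_on with
  | _ n ih =>
  match n, ih with
  | 0, _ =>
    refine ⟨?_, ?_, ?_⟩
    · rw [Chat]
      refine Submodule.span_le.2 ?_
      rintro _ rfl
      exact (mem_Zx ha hb hab).2 ⟨single_mem_Cnx _ _ rfl, Del_nil _ _ _⟩
    · intro z _ hz
      simpa [Bx] using hz
    · intro z hz
      obtain ⟨t, rfl⟩ := Cnx_zero ((mem_Zx ha hb hab).1 hz).1
      refine Submodule.mem_sup_left ?_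
      rw [Chat]
      exact Submodule.smul_mem _ _ (Submodule.subset_span rfl)
  | 1, _ =>
    have h0 : (Finsupp.single (([] : List (Fin m)), x) (1 : ℂ) : Cochain m) ∈ Zx r a b x 0 :=
      (mem_Zx ha hb hab).2 ⟨single_mem_Cnx _ _ rfl, Del_nil _ _ _⟩
    refine ⟨?_, ?_, ?_⟩
    · rw [Chat_one]
      rintro _ ⟨⟨t, v⟩, rfl⟩
      rw [Psi_apply']
      exact add_mem (hla _ _ (Submodule.smul_mem _ _ h0))
        (sum_mem fun c _ => hl _ _ _ (Submodule.smul_mem _ _ h0))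
    · intro z _ hz
      obtain ⟨y, hy, rfl⟩ := (mem_Bx ha hb hab).1 hz
      exact Del_Cnx_zero hy
    · intro z hz
      obtain ⟨hz, hD⟩ := (mem_Zx ha hb hab).1 hz
      refine Submodule.mem_sup_left ?_
      rw [Chat_one]
      have h1 := tl_a_Del ha hb hab z
      rw [hD, map_zero, Del_Cnx_zero (tl_mem a hz), zero_sub] at h1
      have h2 := congrArg (tl a) h1
      rw [map_zero, map_neg, tl_lam_self] at h2
      have h3 : tl b z = 0 := by
        rw [← twist_twist (r := r) (tl b z), neg_eq_zero.1 h2.symm, map_zero]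
      have d := decomp hab hz
      rw [h3, map_zero, add_zero] at d
      obtain ⟨t, ht⟩ := Cnx_zero (tl_mem a hz)
      choose v hv using fun c : Oth a b => Cnx_zero (tl_mem c.1 hz)
      refine ⟨(t, v), ?_⟩
      rw [Psi_apply', ← ht]
      simp only [← hv]
      exact d.symm
  | n + 2, ih =>
    obtain ⟨i0, j0, k0⟩ := ih n (by omega)
    obtain ⟨i1, j1, k1⟩ := ih (n + 1) (by omega)
    refine ⟨?_, ?_, ?_⟩
    · rw [Chat_succ]
      rintro _ ⟨⟨u, w, v⟩, ⟨hu, hw, hv⟩, rfl⟩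
      rw [Phi_apply]
      refine add_mem (sum_mem fun c _ => hl _ _ _ (i1 (hu c trivial)))
        (add_mem ?_ (sum_mem fun c _ => ?_))
      · have := (mem_Zx ha hb hab).1 (i0 hw)
        exact (mem_Zx ha hb hab).2 ⟨theta_mem this.1, by
          rw [Del_theta ha hb hab, this.2, map_zero]⟩
      · rw [LinearMap.add_apply]
        have := hl c _ _ (i0 (hv c trivial))
        exact add_mem (hla _ _ this) (hrho _ _ this)
    · intro z hz hB
      obtain ⟨y, hy, hyz⟩ := (mem_Bx ha hb hab).1 hB
      rw [Chat_succ] at hz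
      obtain ⟨⟨u, w, v⟩, ⟨hu, hw, hv⟩, rfl⟩ := hz
      have h1 := tl_a_Phi ha hab u v w
      rw [← hyz, tl_a_Del ha hb hab] at h1
      have hw0 : w = 0 := by
        have := congrArg (tl b) h1
        rw [map_add, tl_lam_self, tl_sum_lam_ne (Or.inr rfl), add_zero, map_sub,
          tl_lam_ne hab, sub_zero] at this
        exact j0 w hw (this ▸ tl_B ha hb hab hab.symm (tl_mem a hy))
      have hv0 : v = 0 := by
        funext c
        have := congrArg (tl c.1) h1
        rw [map_add, tl_lam_ne c.2.2.symm, tl_sum_lam, zero_add, map_sub,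
          tl_lam_ne c.2.1.symm, sub_zero] at this
        exact j0 (v c) (hv c trivial) (this ▸ tl_B ha hb hab c.2.1 (tl_mem a hy))
      have hu0 : u = 0 := by
        funext c
        have := tl_c_Phi ha c u v w
        rw [← hyz, hv0, Pi.zero_apply, map_zero, add_zero] at this
        exact j1 (u c) (hu c trivial) (this ▸ tl_B ha hb hab c.2.1 hy)
      rw [hu0, hv0, hw0]
      exact map_zero _
    · intro z hz
      obtain ⟨hz, hD⟩ := (mem_Zx ha hb hab).1 hz
      obtain ⟨u, v, w, y, hu, hv, hw, hy, rfl⟩ := cocycle_form ha hb hab hz hD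
      have L : ∀ c : Oth a b, ∀ p ∈ Zx r a b x (n + 1),
          lam [c.1] p ∈ Chat r a b x (n + 2) ⊔ Bx r a b x (n + 2) := by
        intro c p hp
        obtain ⟨h, hh, e, he, rfl⟩ := Submodule.mem_sup.1 (k1 hp)
        rw [map_add]
        refine Submodule.add_mem_sup ?_ (Bx_map ha hb hab (k := 1) (lam [c.1])
          (fun n u hu => lam_mem _ hu) (Del_lam ha hb c.2.2) he)
        rw [Chat]
        refine Submodule.subset_span (Or.inl (Or.inl ?_))
        simp only [Set.mem_iUnion]
        exact ⟨c.1, c.2, h, hh, rfl⟩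
      refine sub_mem (add_mem (add_mem (sum_mem fun c _ => ?_) ?_) (sum_mem fun c _ => ?_)) ?_
      · exact L c _ ((mem_Zx ha hb hab).2 (hu c))
      · obtain ⟨h, hh, e, he, rfl⟩ := Submodule.mem_sup.1 (k0 ((mem_Zx ha hb hab).2 hw))
        rw [map_add]
        refine Submodule.add_mem_sup ?_ (Bx_map ha hb hab (k := 2) (theta a b)
          (fun n u hu => theta_mem hu) (Del_theta ha hb hab) he)
        rw [Chat]
        exact Submodule.subset_span (Or.inl (Or.inr ⟨h, hh, rfl⟩))
      · have hvz := (mem_Zx ha hb hab).2 (hv c)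
        have e1 : lam [a] (lam [c.1] (v c)) =
            (lam [a] + rho r [a]) (lam [c.1] (v c)) - lam [c.1] (rho r [a] (v c)) := by
          rw [LinearMap.add_apply, rho_lam ha]; abel
        rw [e1]
        refine sub_mem ?_ (L c _ (hrho _ _ hvz))
        obtain ⟨h, hh, e, he, hhe⟩ := Submodule.mem_sup.1 (k0 hvz)
        rw [← hhe, map_add, map_add]
        refine Submodule.add_mem_sup ?_ (Bx_map ha hb hab (k := 2)
          ((lam [a] + rho r [a]) ∘ₗ lam [c.1])
          (fun n u hu => add_mem (lam_mem _ (lam_mem _ hu)) (rho_mem ha (lam_mem _ hu)))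
          (fun u => ?_) he)
        · rw [Chat]
          refine Submodule.subset_span (Or.inr ?_)
          simp only [Set.mem_iUnion]
          exact ⟨c.1, c.2, _, ⟨h, hh, rfl⟩, rfl⟩
        · simp only [LinearMap.comp_apply, LinearMap.add_apply, map_add, Del_lam ha hb hab,
            Del_rho ha hb hab, Del_lam ha hb c.2.2]
      · exact Submodule.mem_sup_right ((mem_Bx ha hb hab).2 ⟨_, lam_mem _ hy, rfl⟩)

lemma finrank_quot {V : Type*} [AddCommGroup V] [Module ℂ V] (C Z B : Submodule ℂ V)
    (h1 : C ≤ Z) (h2 : C ⊓ B = ⊥) (h3 : Z ≤ C ⊔ B) :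
    Module.finrank ℂ (Z ⧸ B.comap Z.subtype) = Module.finrank ℂ C := by
  let f : C →ₗ[ℂ] (Z ⧸ B.comap Z.subtype) :=
    (B.comap Z.subtype).mkQ ∘ₗ Submodule.inclusion h1
  have hf : Function.Bijective f := by
    constructor
    · rw [← LinearMap.ker_eq_bot, LinearMap.ker_eq_bot']
      intro u hu
      have : Submodule.inclusion h1 u ∈ B.comap Z.subtype :=
        (Submodule.Quotient.mk_eq_zero _).1 hu
      have h : (u : V) ∈ C ⊓ B := ⟨u.2, this⟩
      rw [h2] at h
      exact Subtype.ext h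
    · intro q
      obtain ⟨z, rfl⟩ := Submodule.Quotient.mk_surjective _ q
      obtain ⟨c, hc, e, he, hce⟩ := Submodule.mem_sup.1 (h3 z.2)
      refine ⟨⟨c, hc⟩, (Submodule.Quotient.eq _).2 ?_⟩
      change (c : V) - z ∈ B
      rw [← hce, sub_add_cancel_left]
      exact neg_mem he
  exact (LinearEquiv.ofBijective f hf).finrank_eq.symm

end Helpers

/-- the cohomology of the restricted complex `(C^•_x, D_x)` has dimension
`(r+s−1)^n`; indeed `Ĉ^n_x` maps isomorphically onto `H^n_x` (it consists of cocycles,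
meets the coboundaries trivially, and together with them spans the cocycles). -/
theorem restricted_cohomology_dim (r s : ℕ) (hr : 1 ≤ r) (hs : 1 ≤ s)
    (e1 fs : Fin (r + s)) (he1 : (e1 : ℕ) = 0) (hfs : (fs : ℕ) = r + s - 1) :
    ∀ x : Fin (r + s), ∀ n : ℕ,
      Module.finrank ℂ (Hx r e1 fs x n) = (r + s - 1) ^ n ∧
      Chat r e1 fs x n ≤ Zx r e1 fs x n ∧
      Chat r e1 fs x n ⊓ Bx r e1 fs x n = ⊥ ∧
      Zx r e1 fs x n ≤ Chat r e1 fs x n ⊔ Bx r e1 fs x n := by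
  intro x n
  have hab : e1 ≠ fs := by
    intro h
    rw [h] at he1
    omega
  have ha : par r e1 = 0 := by
    unfold par; rw [if_pos (by omega)]
  have hb : par r fs = 1 := by
    unfold par; rw [if_neg (by omega)]
  obtain ⟨h1, h2, h3⟩ := main_struct ha hb hab x n
  have h2' : Chat r e1 fs x n ⊓ Bx r e1 fs x n = ⊥ :=
    (Submodule.eq_bot_iff _).2 fun z hz => h2 z hz.1 hz.2
  exact ⟨(finrank_quot _ _ _ h1 h2' h3).trans (Chat_dim ha hab (by omega) x n).2, h1, h2', h3⟩


end NilpotentCohomology
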